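/- In the tied braid monoid TB_n^B of type B, the ties induce a transitive (hence equivalence) relation on the strands; concretely: for all pairwise distinct i, k, m ∈ {1, …, n}, η_{i,k} η_{k,m} η_{i,m} = η_{i,k} η_{k,m}; and for all i ≠ j in {1, …, n}, φ_i φ_j η_{i,j} = φ_i φ_j and η_{i,j} φ_i φ_j = η_{i,j} φ_i (so the redundant tie implied by transitivity can be absorbed). -/

import Mathlib

/-! The tied braid monoid of type B, `TBₙᴮ`, presented by generators and relations. -/

/-- Generators of the tied braid monoid of type B on `n` (moving) strands:
`sig i` is `σ_{i+1}`, `sigInv i` is `σ_{i+1}⁻¹`, `rho` is `ρ₁`, `rhoInv` is `ρ₁⁻¹`,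
`phi` is `φ₁` and `eta i` is `η_{i+1}` (for `i : Fin (n-1)`). -/
inductive TBGen (n : ℕ) : Type
  | sig : Fin (n - 1) → TBGen n
  | sigInv : Fin (n - 1) → TBGen n
  | rho : TBGen n
  | rhoInv : TBGen n
  | phi : TBGen n
  | eta : Fin (n - 1) → TBGen n

namespace TiedBraidB

variable (n : ℕ)

/-- The word `σᵢ` (for `1 ≤ i ≤ n-1`; junk value `1` otherwise). -/
def wσ (i : ℕ) : FreeMonoid (TBGen n) :=
  if h : 1 ≤ i ∧ i ≤ n - 1 then FreeMonoid.of (TBGen.sig ⟨i - 1, by omega⟩) else 1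

/-- The word `σᵢ⁻¹`. -/
def wσi (i : ℕ) : FreeMonoid (TBGen n) :=
  if h : 1 ≤ i ∧ i ≤ n - 1 then FreeMonoid.of (TBGen.sigInv ⟨i - 1, by omega⟩) else 1

/-- The word `ηᵢ`. -/
def wη (i : ℕ) : FreeMonoid (TBGen n) :=
  if h : 1 ≤ i ∧ i ≤ n - 1 then FreeMonoid.of (TBGen.eta ⟨i - 1, by omega⟩) else 1

/-- The word `ρ₁`. -/
def wρ : FreeMonoid (TBGen n) := FreeMonoid.of TBGen.rho

/-- The word `ρ₁⁻¹`. -/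
def wρi : FreeMonoid (TBGen n) := FreeMonoid.of TBGen.rhoInv

/-- The word `φ₁`. -/
def wφ : FreeMonoid (TBGen n) := FreeMonoid.of TBGen.phi

/-- The descending word `σₖ σₖ₋₁ ⋯ σ₁`. -/
def wσDesc : ℕ → FreeMonoid (TBGen n)
  | 0 => 1
  | k + 1 => wσ n (k + 1) * wσDesc k

/-- The ascending word `σ₁ σ₂ ⋯ σₖ`. -/
def wσAsc : ℕ → FreeMonoid (TBGen n)
  | 0 => 1
  | k + 1 => wσAsc k * wσ n (k + 1)

/-- The descending word `σₖ⁻¹ σₖ₋₁⁻¹ ⋯ σ₁⁻¹`. -/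
def wσiDesc : ℕ → FreeMonoid (TBGen n)
  | 0 => 1
  | k + 1 => wσi n (k + 1) * wσiDesc k

/-- The ascending word `σ₁⁻¹ σ₂⁻¹ ⋯ σₖ⁻¹`. -/
def wσiAsc : ℕ → FreeMonoid (TBGen n)
  | 0 => 1
  | k + 1 => wσiAsc k * wσi n (k + 1)

/-- The defining relations of the tied braid monoid `TBₙᴮ` of type B. -/
inductive tbRel : FreeMonoid (TBGen n) → FreeMonoid (TBGen n) → Prop
  | sig_inv (i : ℕ) (h1 : 1 ≤ i) (h2 : i ≤ n - 1) :
      tbRel (wσ n i * wσi n i) 1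
  | inv_sig (i : ℕ) (h1 : 1 ≤ i) (h2 : i ≤ n - 1) :
      tbRel (wσi n i * wσ n i) 1
  | rho_inv : tbRel (wρ n * wρi n) 1
  | inv_rho : tbRel (wρi n * wρ n) 1
  | sig_comm (i j : ℕ) (h1 : 1 ≤ i) (h2 : i + 1 < j) (h3 : j ≤ n - 1) :
      tbRel (wσ n i * wσ n j) (wσ n j * wσ n i)
  | sig_braid (i : ℕ) (h1 : 1 ≤ i) (h2 : i + 1 ≤ n - 1) :
      tbRel (wσ n i * wσ n (i + 1) * wσ n i) (wσ n (i + 1) * wσ n i * wσ n (i + 1))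
  | rho_sig (i : ℕ) (h1 : 2 ≤ i) (h2 : i ≤ n - 1) :
      tbRel (wρ n * wσ n i) (wσ n i * wρ n)
  | rho_sig_rho_sig (h : 2 ≤ n) :
      tbRel (wρ n * wσ n 1 * wρ n * wσ n 1) (wσ n 1 * wρ n * wσ n 1 * wρ n)
  | eta_comm (i j : ℕ) (h1 : 1 ≤ i) (h2 : i ≤ n - 1) (h3 : 1 ≤ j) (h4 : j ≤ n - 1) :
      tbRel (wη n i * wη n j) (wη n j * wη n i)
  | eta_sig (i : ℕ) (h1 : 1 ≤ i) (h2 : i ≤ n - 1) :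
      tbRel (wη n i * wσ n i) (wσ n i * wη n i)
  | eta_sig_far (i j : ℕ) (h1 : 1 ≤ i) (h2 : i ≤ n - 1) (h3 : 1 ≤ j) (h4 : j ≤ n - 1)
      (h5 : i + 1 < j ∨ j + 1 < i) :
      tbRel (wη n i * wσ n j) (wσ n j * wη n i)
  | eta_sig_sig (i j : ℕ) (h1 : 1 ≤ i) (h2 : i ≤ n - 1) (h3 : 1 ≤ j) (h4 : j ≤ n - 1)
      (h5 : j = i + 1 ∨ i = j + 1) :
      tbRel (wη n i * wσ n j * wσ n i) (wσ n j * wσ n i * wη n j)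
  | eta_sig_sigInv (i j : ℕ) (h1 : 1 ≤ i) (h2 : i ≤ n - 1) (h3 : 1 ≤ j) (h4 : j ≤ n - 1)
      (h5 : j = i + 1 ∨ i = j + 1) :
      tbRel (wη n i * wσ n j * wσi n i) (wσ n j * wσi n i * wη n j)
  | eta_eta_sig (i j : ℕ) (h1 : 1 ≤ i) (h2 : i ≤ n - 1) (h3 : 1 ≤ j) (h4 : j ≤ n - 1)
      (h5 : j = i + 1 ∨ i = j + 1) :
      tbRel (wη n i * wη n j * wσ n i) (wσ n i * wη n i * wη n j)
  | eta_eta_sig' (i j : ℕ) (h1 : 1 ≤ i) (h2 : i ≤ n - 1) (h3 : 1 ≤ j) (h4 : j ≤ n - 1)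
      (h5 : j = i + 1 ∨ i = j + 1) :
      tbRel (wη n i * wη n j * wσ n i) (wη n j * wσ n i * wη n j)
  | eta_idem (i : ℕ) (h1 : 1 ≤ i) (h2 : i ≤ n - 1) :
      tbRel (wη n i * wη n i) (wη n i)
  | phi_idem : tbRel (wφ n * wφ n) (wφ n)
  | rho_eta (i : ℕ) (h1 : 1 ≤ i) (h2 : i ≤ n - 1) :
      tbRel (wρ n * wη n i) (wη n i * wρ n)
  | rho_phi : tbRel (wρ n * wφ n) (wφ n * wρ n)
  | phi_eta (i : ℕ) (h1 : 1 ≤ i) (h2 : i ≤ n - 1) :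
      tbRel (wφ n * wη n i) (wη n i * wφ n)
  | phi_sig (i : ℕ) (h1 : 2 ≤ i) (h2 : i ≤ n - 1) :
      tbRel (wφ n * wσ n i) (wσ n i * wφ n)
  | phi_move (i : ℕ) (h1 : 2 ≤ i) (h2 : i ≤ n) :
      tbRel (wσDesc n (i - 1) * wφ n * wσiAsc n (i - 1))
        (wσiDesc n (i - 1) * wφ n * wσAsc n (i - 1))
  | phi_eta_one (h : 2 ≤ n) :
      tbRel (wφ n * wη n 1) (wφ n * wσ n 1 * wφ n * wσi n 1)
  | phi_eta_one' (h : 2 ≤ n) :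
      tbRel (wφ n * wσ n 1 * wφ n * wσi n 1) (wσ n 1 * wφ n * wσi n 1 * wη n 1)

/-- The tied braid monoid of type B on `n` strands. -/
def TB : Type := (conGen (tbRel n)).Quotient

instance : Monoid (TB n) := inferInstanceAs (Monoid (conGen (tbRel n)).Quotient)

/-- The canonical projection from the free monoid on the generators onto `TBₙᴮ`. -/
def mk : FreeMonoid (TBGen n) →* TB n := Con.mk' _

/-- The generator `σᵢ` of `TBₙᴮ`. -/
def σB (i : ℕ) : TB n := mk n (wσ n i)

/-- The generator `σᵢ⁻¹` of `TBₙᴮ`. -/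
def σiB (i : ℕ) : TB n := mk n (wσi n i)

/-- The generator `ρ₁` of `TBₙᴮ`. -/
def ρB : TB n := mk n (wρ n)

/-- The generator `ρ₁⁻¹` of `TBₙᴮ`. -/
def ρiB : TB n := mk n (wρi n)

/-- The generator `φ₁` of `TBₙᴮ`. -/
def φB : TB n := mk n (wφ n)

/-- The generator `ηᵢ` of `TBₙᴮ`. -/
def ηB (i : ℕ) : TB n := mk n (wη n i)

/-- The word `σᵢ σᵢ₊₁ ⋯ σₖ` (empty if `k < i`). -/
def wσRange (i k : ℕ) : FreeMonoid (TBGen n) :=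
  ((List.range' i (k + 1 - i)).map (wσ n)).prod

/-- The word `σₖ⁻¹ σₖ₋₁⁻¹ ⋯ σᵢ⁻¹` (empty if `k < i`). -/
def wσiRangeRev (i k : ℕ) : FreeMonoid (TBGen n) :=
  ((List.range' i (k + 1 - i)).reverse.map (wσi n)).prod

/-- The word representing the generalized tie `η_{i,j}`:
`σᵢ ⋯ σ_{j-2} η_{j-1} σ_{j-2}⁻¹ ⋯ σᵢ⁻¹` for `i < j`, with the conventions
`η_{i,i} = 1` and `η_{j,i} = η_{i,j}`. -/
def wηg (i j : ℕ) : FreeMonoid (TBGen n) :=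
  if i = j then 1
  else wσRange n (min i j) (max i j - 2) * wη n (max i j - 1) *
    wσiRangeRev n (min i j) (max i j - 2)

/-- The word representing the generalized tie `φⱼ = σ_{j-1} ⋯ σ₁ φ₁ σ₁⁻¹ ⋯ σ_{j-1}⁻¹`. -/
def wφg (j : ℕ) : FreeMonoid (TBGen n) :=
  wσDesc n (j - 1) * wφ n * wσiAsc n (j - 1)

/-- The generalized tie `η_{i,j}` joining the `i`-th and `j`-th moving strands. -/
def ηg (i j : ℕ) : TB n := mk n (wηg n i j)

/-- The generalized tie `φⱼ` joining the fixed strand and the `j`-th moving strand. -/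
def φg (j : ℕ) : TB n := mk n (wφg n j)

end TiedBraidB


namespace TiedBraidB

theorem rel {n : ℕ} {a b : FreeMonoid (TBGen n)} (h : tbRel n a b) : mk n a = mk n b :=
  (Con.eq _).2 (ConGen.Rel.of _ _ h)

theorem sig_inv_all (n k : ℕ) : σB n k * σiB n k = 1 := by
  by_cases h : 1 ≤ k ∧ k ≤ n - 1
  · have := rel (tbRel.sig_inv k h.1 h.2)
    rwa [map_mul, map_one] at this
  · simp [σB, σiB, wσ, wσi, h]

theorem inv_sig_all (n k : ℕ) : σiB n k * σB n k = 1 := by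
  by_cases h : 1 ≤ k ∧ k ≤ n - 1
  · have := rel (tbRel.inv_sig k h.1 h.2)
    rwa [map_mul, map_one] at this
  · simp [σB, σiB, wσ, wσi, h]

/-- The generator `σₖ` as a unit. -/
def uσ (n k : ℕ) : (TB n)ˣ := ⟨σB n k, σiB n k, sig_inv_all n k, inv_sig_all n k⟩

/-- Conjugation by a unit. -/
def cj {M : Type*} [Monoid M] (u : Mˣ) (x : M) : M := u * x * (u⁻¹ : Mˣ)

theorem cj_mul {M : Type*} [Monoid M] (u : Mˣ) (x y : M) : cj u (x * y) = cj u x * cj u y := by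
  simp [cj, mul_assoc]

theorem cj_cj {M : Type*} [Monoid M] (u v : Mˣ) (x : M) : cj u (cj v x) = cj (u * v) x := by
  simp [cj, mul_assoc]

theorem cj_one {M : Type*} [Monoid M] (x : M) : cj (1 : Mˣ) x = x := by
  simp [cj]

theorem cj_eq_iff {M : Type*} [Monoid M] (u : Mˣ) (x y : M) :
    cj u x = y ↔ (u : M) * x = y * u := by
  rw [cj, Units.mul_inv_eq_iff_eq_mul]

theorem cj_inj {M : Type*} [Monoid M] (u : Mˣ) {x y : M} (h : cj u x = cj u y) : x = y := by
  have := congrArg (cj u⁻¹) h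
  simpa [cj_cj, cj_one] using this

variable {n : ℕ}

theorem u_comm {i j : ℕ} (h1 : 1 ≤ i) (h2 : i + 1 < j) (h3 : j ≤ n - 1) :
    uσ n i * uσ n j = uσ n j * uσ n i := by
  ext
  have := rel (tbRel.sig_comm i j h1 h2 h3)
  rwa [map_mul, map_mul] at this

theorem u_braid {i : ℕ} (h1 : 1 ≤ i) (h2 : i + 1 ≤ n - 1) :
    uσ n i * uσ n (i + 1) * uσ n i = uσ n (i + 1) * uσ n i * uσ n (i + 1) := by
  ext
  have := rel (tbRel.sig_braid i h1 h2)
  simp only [map_mul] at this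
  exact this

/-- Conjugation by `σₖ`. -/
def c (n k : ℕ) (x : TB n) : TB n := cj (uσ n k) x

theorem c_mul (k : ℕ) (x y : TB n) : c n k (x * y) = c n k x * c n k y := cj_mul _ _ _

theorem c_inj (k : ℕ) {x y : TB n} (h : c n k x = c n k y) : x = y := cj_inj _ h

theorem c_comm {i j : ℕ} (hi : 1 ≤ i) (hj : 1 ≤ j) (hi' : i ≤ n - 1) (hj' : j ≤ n - 1)
    (h : i + 1 < j ∨ j + 1 < i) (x : TB n) :
    c n i (c n j x) = c n j (c n i x) := by
  unfold c
  rw [cj_cj, cj_cj]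
  rcases h with h | h
  · rw [u_comm hi h hj']
  · rw [u_comm hj h hi']

theorem c_braid {i : ℕ} (h1 : 1 ≤ i) (h2 : i + 1 ≤ n - 1) (x : TB n) :
    c n i (c n (i + 1) (c n i x)) = c n (i + 1) (c n i (c n (i + 1) x)) := by
  unfold c
  simp only [cj_cj, ← mul_assoc]
  rw [u_braid h1 h2]

theorem c_eta_self {i : ℕ} (h1 : 1 ≤ i) (h2 : i ≤ n - 1) : c n i (ηB n i) = ηB n i := by
  have := rel (tbRel.eta_sig i h1 h2)
  rw [map_mul, map_mul] at this
  exact (cj_eq_iff _ _ _).2 this.symm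

theorem c_eta_far {i k : ℕ} (h1 : 1 ≤ i) (h2 : i ≤ n - 1) (h3 : 1 ≤ k) (h4 : k ≤ n - 1)
    (h5 : i + 1 < k ∨ k + 1 < i) : c n k (ηB n i) = ηB n i := by
  have := rel (tbRel.eta_sig_far i k h1 h2 h3 h4 h5)
  rw [map_mul, map_mul] at this
  exact (cj_eq_iff _ _ _).2 this.symm

theorem c_c_eta {i j : ℕ} (h1 : 1 ≤ i) (h2 : i ≤ n - 1) (h3 : 1 ≤ j) (h4 : j ≤ n - 1)
    (h5 : j = i + 1 ∨ i = j + 1) : c n j (c n i (ηB n j)) = ηB n i := by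
  have := rel (tbRel.eta_sig_sig i j h1 h2 h3 h4 h5)
  simp only [map_mul] at this
  unfold c
  rw [cj_cj, cj_eq_iff]
  rw [mul_assoc (mk n (wη n i))] at this
  exact this.symm

theorem c_ci_eta {i j : ℕ} (h1 : 1 ≤ i) (h2 : i ≤ n - 1) (h3 : 1 ≤ j) (h4 : j ≤ n - 1)
    (h5 : j = i + 1 ∨ i = j + 1) : c n j (cj (uσ n i)⁻¹ (ηB n j)) = ηB n i := by
  have := rel (tbRel.eta_sig_sigInv i j h1 h2 h3 h4 h5)
  simp only [map_mul] at this
  unfold c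
  rw [cj_cj, cj_eq_iff]
  rw [mul_assoc (mk n (wη n i))] at this
  exact this.symm

theorem c_sq_eta {i j : ℕ} (h1 : 1 ≤ i) (h2 : i ≤ n - 1) (h3 : 1 ≤ j) (h4 : j ≤ n - 1)
    (h5 : j = i + 1 ∨ i = j + 1) : c n i (c n i (ηB n j)) = ηB n j := by
  have h := c_inj j ((c_c_eta h1 h2 h3 h4 h5).trans (c_ci_eta h1 h2 h3 h4 h5).symm)
  rw [h]
  simp [c, cj_cj, cj_one]

theorem c_eta_swap {i j : ℕ} (h1 : 1 ≤ i) (h2 : i ≤ n - 1) (h3 : 1 ≤ j) (h4 : j ≤ n - 1)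
    (h5 : j = i + 1 ∨ i = j + 1) : c n i (ηB n j) = c n j (ηB n i) := by
  apply c_inj j
  rw [c_c_eta h1 h2 h3 h4 h5, c_sq_eta h3 h4 h1 h2 (by omega)]

theorem ηg_symm (i j : ℕ) : ηg n i j = ηg n j i := by
  simp only [ηg, wηg, min_comm i j, max_comm i j, eq_comm (a := i)]

theorem ηg_base {i : ℕ} (h : 1 ≤ i) : ηg n i (i + 1) = ηB n i := by
  have e : i + 1 - 2 + 1 - i = 0 := by omega
  have a1 : min i (i + 1) = i := by omega
  have a2 : max i (i + 1) = i + 1 := by omega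
  simp only [ηg, wηg, wσRange, wσiRangeRev, ηB, a1, a2, e]
  simp

theorem ηg_succ {i j : ℕ} (h : i + 1 < j) : ηg n i j = c n i (ηg n (i + 1) j) := by
  have a1 : min i j = i := by omega
  have a2 : max i j = j := by omega
  have a3 : min (i + 1) j = i + 1 := by omega
  have a4 : max (i + 1) j = j := by omega
  have e : j - 2 + 1 - i = (j - 2 + 1 - (i + 1)) + 1 := by omega
  have h1 : i ≠ j := by omega
  have h2 : i + 1 ≠ j := by omega
  simp only [ηg, wηg, a1, a2, a3, a4, h1, h2, if_false, wσRange, wσiRangeRev]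
  rw [e, List.range'_succ]
  simp only [List.map_cons, List.prod_cons, List.reverse_cons, List.map_append, List.prod_append,
    map_mul, List.map_nil, List.prod_nil, map_one, mul_one, c, cj]
  simp only [uσ, σB, σiB, Units.inv_mk, mul_assoc]

/-- The transposition of `k` and `k+1`. -/
def swp (k x : ℕ) : ℕ := if x = k then k + 1 else if x = k + 1 then k else x

theorem swp_left (k : ℕ) : swp k k = k + 1 := by simp [swp]
theorem swp_right (k : ℕ) : swp k (k + 1) = k := by simp [swp]
theorem swp_ne {k x : ℕ} (h1 : x ≠ k) (h2 : x ≠ k + 1) : swp k x = x := by simp [swp, h1, h2]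

theorem c_ηg_lt (d : ℕ) : ∀ i k : ℕ, 1 ≤ i → i + 1 + d ≤ n → 1 ≤ k → k ≤ n - 1 →
    c n k (ηg n i (i + 1 + d)) = ηg n (swp k i) (swp k (i + 1 + d)) := by
  induction d using Nat.strong_induction_on with
  | _ d ih =>
  intro i k hi hj hk hk'
  rcases d with _ | d
  · rw [add_zero, ηg_base hi]
    rcases (by omega : k = i ∨ k + 1 = i ∨ k = i + 1 ∨ (i + 1 < k ∨ k + 1 < i)) with
      h | h | h | h
    · subst h
      rw [c_eta_self hk hk', swp_left, swp_right, ηg_symm, ηg_base hk]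
    · subst h
      rw [swp_right, swp_ne (by omega) (by omega), ηg_succ (by omega), ηg_base hi]
    · subst h
      rw [swp_left, swp_ne (by omega) (by omega), ηg_succ (by omega), ηg_base (by omega)]
      exact c_eta_swap (by omega) (by omega) (by omega) (by omega) (by omega)
    · rw [c_eta_far hi (by omega) hk hk' h, swp_ne (by omega) (by omega),
        swp_ne (by omega) (by omega), ηg_base hi]
  · have e : i + 1 + (d + 1) = (i + 1) + 1 + d := by omega
    have ih1 := fun k => ih d (by omega) (i + 1) k (by omega) (by omega)
    rw [e]
    rw [e] at hj
    rcases (by omega : k + 1 < i ∨ k + 1 = i ∨ k = i ∨ k = i + 1 ∨ i + 1 < k) with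
      h | h | h | h | h
    · rw [ηg_succ (by omega), c_comm hk hi hk' (by omega) (by omega), ih1 k hk hk',
        swp_ne (by omega) (by omega), swp_ne (by omega) (by omega), swp_ne (by omega) (by omega),
        ηg_succ (i := i) (by omega)]
    · subst h
      rw [swp_right, swp_ne (by omega) (by omega), ← ηg_succ (by omega)]
    · subst h
      rw [swp_left, swp_ne (by omega) (by omega), ηg_succ (by omega)]
      rcases d with _ | d
      · rw [add_zero, ηg_base (by omega)]
        exact c_sq_eta (by omega) (by omega) (by omega) (by omega) (by omega)
      · have e2 : k + 1 + 1 + (d + 1) = (k + 1 + 1) + 1 + d := by omega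
        have hA := ih1 (k + 1) (by omega) (by omega)
        rw [swp_left, swp_ne (by omega) (by omega)] at hA
        have hB := ih d (by omega) (k + 1 + 1) k (by omega) (by omega) hk hk'
        rw [swp_ne (by omega) (by omega), swp_ne (by omega) (by omega)] at hB
        rw [e2] at hA ⊢
        have hS := ηg_succ (n := n) (i := k + 1) (j := k + 1 + 1 + 1 + d) (by omega)
        rw [hS] at hA ⊢
        -- with `X` the shorter tie: `c k X = X` and `c (k+1) (c (k+1) X) = X`
        generalize ηg n (k + 1 + 1) (k + 1 + 1 + 1 + d) = X at hA hB
        have b1 := c_braid hk (by omega : k + 1 ≤ n - 1) X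
        rw [hB] at b1
        rw [b1, c_braid hk (by omega : k + 1 ≤ n - 1), hA, hB]
    · subst h
      rcases d with _ | d
      · rw [add_zero, swp_right, swp_ne (by omega) (by omega), ηg_succ (by omega),
          ηg_base (by omega), ηg_base (by omega),
          c_eta_swap (by omega) (by omega) (by omega) (by omega) (by omega)]
        exact c_sq_eta (by omega) (by omega) (by omega) (by omega) (by omega)
      · have e2 : i + 1 + 1 + (d + 1) = (i + 1 + 1) + 1 + d := by omega
        have hB := ih d (by omega) (i + 1 + 1) i (by omega) (by omega) hi (by omega)
        rw [swp_ne (by omega) (by omega), swp_ne (by omega) (by omega)] at hB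
        rw [e2, swp_ne (by omega) (by omega), swp_ne (by omega) (by omega),
          ηg_succ (by omega), ηg_succ (i := i + 1) (by omega),
          ← c_braid hi (by omega), hB]
    · have hs : i + 1 < swp k (i + 1 + 1 + d) := by unfold swp; split_ifs <;> omega
      rw [ηg_succ (by omega), c_comm hk hi hk' (by omega) (by omega), ih1 k hk hk',
        swp_ne (x := i + 1) (by omega) (by omega), swp_ne (x := i) (by omega) (by omega),
        ηg_succ hs]

theorem c_ηg {i j k : ℕ} (hi : 1 ≤ i) (hi' : i ≤ n) (hj : 1 ≤ j) (hj' : j ≤ n) (hij : i ≠ j)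
    (hk : 1 ≤ k) (hk' : k ≤ n - 1) :
    c n k (ηg n i j) = ηg n (swp k i) (swp k j) := by
  rcases lt_or_gt_of_ne hij with h | h
  · obtain ⟨d, rfl⟩ : ∃ d, j = i + 1 + d := ⟨j - i - 1, by omega⟩
    exact c_ηg_lt d i k hi hj' hk hk'
  · obtain ⟨d, rfl⟩ : ∃ d, i = j + 1 + d := ⟨i - j - 1, by omega⟩
    rw [ηg_symm, ηg_symm (swp k _)]
    exact c_ηg_lt d j k hj hi' hk hk'

theorem φg_one : φg n 1 = φB n := by
  simp [φg, wφg, wσDesc, wσiAsc, φB]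

theorem φg_succ {j : ℕ} (h : 1 ≤ j) : φg n (j + 1) = c n j (φg n j) := by
  obtain ⟨j, rfl⟩ : ∃ m, j = m + 1 := ⟨j - 1, by omega⟩
  simp only [φg, wφg, Nat.add_sub_cancel, wσDesc, wσiAsc, map_mul, c, cj, uσ, σB, σiB,
    Units.inv_mk, mul_assoc]

theorem φg_alt {j : ℕ} (h1 : 1 ≤ j) (h2 : j ≤ n) :
    φg n j = mk n (wσiDesc n (j - 1) * wφ n * wσAsc n (j - 1)) := by
  rcases (by omega : j = 1 ∨ 2 ≤ j) with rfl | h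
  · simp [φg, wφg, wσDesc, wσiAsc, wσiDesc, wσAsc]
  · exact rel (tbRel.phi_move j h h2)

theorem φg_succ_inv {j : ℕ} (h : 1 ≤ j) (h' : j + 1 ≤ n) : c n j (φg n (j + 1)) = φg n j := by
  have : φg n (j + 1) = cj (uσ n j)⁻¹ (φg n j) := by
    rw [φg_alt (by omega) h', φg_alt h (by omega)]
    obtain ⟨j, rfl⟩ : ∃ m, j = m + 1 := ⟨j - 1, by omega⟩
    simp only [Nat.add_sub_cancel, wσiDesc, wσAsc, map_mul, cj, uσ, σB, σiB,
      Units.inv_mk, mul_assoc]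
  rw [this]
  simp [c, cj_cj, cj_one]

theorem c_φg_succ (j : ℕ) : ∀ k : ℕ, j + 1 ≤ n → 1 ≤ k → k ≤ n - 1 →
    c n k (φg n (j + 1)) = φg n (swp k (j + 1)) := by
  induction j using Nat.strong_induction_on with
  | _ j ih =>
  intro k hj hk hk'
  rcases (by omega : k = j + 1 ∨ k = j ∨ j + 1 < k ∨ k + 1 = j ∨ k + 1 < j) with
    h | h | h | h | h
  · subst h
    rw [swp_left, ← φg_succ hk]
  · subst h
    rw [swp_right, φg_succ_inv hk hj]
  · rw [swp_ne (by omega) (by omega)]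
    rcases j with _ | j
    · rw [zero_add, φg_one]
      have := rel (tbRel.phi_sig (n := n) k (by omega) hk')
      rw [map_mul, map_mul] at this
      exact (cj_eq_iff _ _ _).2 this.symm
    · rw [φg_succ (by omega), c_comm hk (by omega) hk' (by omega) (by omega),
        ih j (by omega) k (by omega) hk hk', swp_ne (by omega) (by omega)]
  · subst h
    rw [swp_ne (by omega) (by omega), φg_succ (by omega), φg_succ hk,
      c_braid hk (by omega)]
    obtain ⟨l, rfl⟩ : ∃ l, k = l + 1 := ⟨k - 1, by omega⟩
    rw [ih l (by omega) (l + 1 + 1) (by omega) (by omega) (by omega), swp_ne (by omega) (by omega)]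
  · obtain ⟨l, rfl⟩ : ∃ l, j = l + 1 := ⟨j - 1, by omega⟩
    rw [swp_ne (by omega) (by omega), φg_succ (by omega),
      c_comm hk (by omega) hk' (by omega) (by omega),
      ih l (by omega) k (by omega) hk hk', swp_ne (by omega) (by omega)]

theorem c_φg {j k : ℕ} (h1 : 1 ≤ j) (h2 : j ≤ n) (hk : 1 ≤ k) (hk' : k ≤ n - 1) :
    c n k (φg n j) = φg n (swp k j) := by
  obtain ⟨l, rfl⟩ : ∃ l, j = l + 1 := ⟨j - 1, by omega⟩
  exact c_φg_succ l k h2 hk hk'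

theorem swp_bd {n k x : ℕ} (hk : 1 ≤ k) (hk' : k ≤ n - 1) (hx : 1 ≤ x ∧ x ≤ n) :
    1 ≤ swp k x ∧ swp k x ≤ n := by
  unfold swp; split_ifs <;> omega

theorem swp_inj {k x y : ℕ} (h : x ≠ y) : swp k x ≠ swp k y := by
  unfold swp; split_ifs <;> omega

/-- A property of distinct triples invariant under adjacent transpositions. -/
theorem triple_reach (P : ℕ → ℕ → ℕ → Prop)
    (hP : ∀ k, 1 ≤ k → k ≤ n - 1 → ∀ a b d, (1 ≤ a ∧ a ≤ n) → (1 ≤ b ∧ b ≤ n) → (1 ≤ d ∧ d ≤ n) →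
      a ≠ b → b ≠ d → a ≠ d → P (swp k a) (swp k b) (swp k d) → P a b d)
    (h0 : 3 ≤ n → P 1 2 3) :
    ∀ a b d, (1 ≤ a ∧ a ≤ n) → (1 ≤ b ∧ b ≤ n) → (1 ≤ d ∧ d ≤ n) →
      a ≠ b → b ≠ d → a ≠ d → P a b d := by
  have s1 : ∀ x, ∀ d, d = x + 3 → d ≤ n → P 1 2 d := by
    intro x
    induction x with
    | zero => rintro d rfl h; exact h0 h
    | succ x ih =>
      rintro d rfl h
      apply hP (x + 3) (by omega) (by omega) _ _ _ (by omega) (by omega) (by omega)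
        (by omega) (by omega) (by omega)
      rw [swp_ne (by omega) (by omega), swp_ne (by omega) (by omega)]
      exact ih _ (swp_right (x + 3)) (by rw [swp_right]; omega)
  have s2 : ∀ x, ∀ b d, b = x + 2 → b ≤ n → (1 ≤ d ∧ d ≤ n) → b ≠ d → 1 ≠ d → P 1 b d := by
    intro x
    induction x with
    | zero => rintro b d rfl h hd h1 h2; exact s1 (d - 3) d (by omega) hd.2
    | succ x ih =>
      rintro b d rfl h hd h1 h2
      apply hP (x + 2) (by omega) (by omega) _ _ _ (by omega) (by omega) (by omega)
        (by omega) (by omega) (by omega)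
      have hd' := swp_bd (n := n) (k := x + 2) (by omega) (by omega) hd
      have q1 : swp (x + 2) (x + 1 + 2) ≠ swp (x + 2) d := swp_inj h1
      have q2 : swp (x + 2) 1 ≠ swp (x + 2) d := swp_inj h2
      rw [swp_ne (x := 1) (by omega) (by omega)] at q2 ⊢
      exact ih _ _ (swp_right (x + 2)) (by rw [swp_right]; omega) hd' q1 q2
  have s3 : ∀ x, ∀ a b d, a = x + 1 → a ≤ n → (1 ≤ b ∧ b ≤ n) → (1 ≤ d ∧ d ≤ n) →
      a ≠ b → b ≠ d → a ≠ d → P a b d := by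
    intro x
    induction x with
    | zero =>
      rintro a b d rfl h hb hd h1 h2 h3
      exact s2 (b - 2) b d (by omega) hb.2 hd h2 h3
    | succ x ih =>
      rintro a b d rfl h hb hd h1 h2 h3
      apply hP (x + 1) (by omega) (by omega) _ _ _ (by omega) (by omega) (by omega)
        (by omega) (by omega) (by omega)
      exact ih _ _ _ (swp_right (x + 1)) (by rw [swp_right]; omega)
        (swp_bd (by omega) (by omega) hb) (swp_bd (by omega) (by omega) hd)
        (swp_inj h1) (swp_inj h2) (swp_inj h3)
  intro a b d ha hb hd
  exact s3 (a - 1) a b d (by omega) ha.2 hb hd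

/-- A property of distinct pairs invariant under adjacent transpositions. -/
theorem pair_reach (P : ℕ → ℕ → Prop)
    (hP : ∀ k, 1 ≤ k → k ≤ n - 1 → ∀ a b, (1 ≤ a ∧ a ≤ n) → (1 ≤ b ∧ b ≤ n) →
      a ≠ b → P (swp k a) (swp k b) → P a b)
    (h0 : 2 ≤ n → P 1 2) :
    ∀ a b, (1 ≤ a ∧ a ≤ n) → (1 ≤ b ∧ b ≤ n) → a ≠ b → P a b := by
  have s2 : ∀ x, ∀ b, b = x + 2 → b ≤ n → P 1 b := by
    intro x
    induction x with
    | zero => rintro b rfl h; exact h0 h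
    | succ x ih =>
      rintro b rfl h
      apply hP (x + 2) (by omega) (by omega) _ _ (by omega) (by omega) (by omega)
      rw [swp_ne (x := 1) (by omega) (by omega)]
      exact ih _ (swp_right (x + 2)) (by rw [swp_right]; omega)
  have s3 : ∀ x, ∀ a b, a = x + 1 → a ≤ n → (1 ≤ b ∧ b ≤ n) → a ≠ b → P a b := by
    intro x
    induction x with
    | zero =>
      rintro a b rfl h hb h1
      exact s2 (b - 2) b (by omega) hb.2
    | succ x ih =>
      rintro a b rfl h hb h1
      apply hP (x + 1) (by omega) (by omega) _ _ (by omega) (by omega) (by omega)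
      exact ih _ _ (swp_right (x + 1)) (by rw [swp_right]; omega)
        (swp_bd (by omega) (by omega) hb) (swp_inj h1)
  intro a b ha hb
  exact s3 (a - 1) a b (by omega) ha.2 hb

theorem triple_base (h : 3 ≤ n) :
    ηg n 1 2 * ηg n 2 3 * ηg n 1 3 = ηg n 1 2 * ηg n 2 3 := by
  have e12 : ηg n 1 2 = ηB n 1 := ηg_base (by omega)
  have e23 : ηg n 2 3 = ηB n 2 := ηg_base (by omega)
  have e13 : ηg n 1 3 = c n 1 (ηg n 2 3) := ηg_succ (by omega)
  have hi : ηB n 1 * ηB n 1 = ηB n 1 := by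
    have := rel (tbRel.eta_idem (n := n) 1 (by omega) (by omega))
    rwa [map_mul] at this
  have hr : ηB n 1 * ηB n 2 * σB n 1 = ηB n 2 * σB n 1 * ηB n 2 := by
    have := rel (tbRel.eta_eta_sig' (n := n) 1 2 (by omega) (by omega) (by omega) (by omega)
      (by omega))
    simp only [map_mul] at this
    exact this
  rw [e13, e12, e23]
  change ηB n 1 * ηB n 2 * (σB n 1 * ηB n 2 * σiB n 1) = _
  calc ηB n 1 * ηB n 2 * (σB n 1 * ηB n 2 * σiB n 1)
      = ηB n 1 * (ηB n 2 * σB n 1 * ηB n 2) * σiB n 1 := by simp only [mul_assoc]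
    _ = (ηB n 1 * ηB n 1) * ηB n 2 * (σB n 1 * σiB n 1) := by rw [← hr]; simp only [mul_assoc]
    _ = _ := by rw [hi, sig_inv_all, mul_one]

theorem pair_base (h : 2 ≤ n) :
    φg n 1 * φg n 2 * ηg n 1 2 = φg n 1 * φg n 2 ∧
      ηg n 1 2 * φg n 1 * φg n 2 = ηg n 1 2 * φg n 1 := by
  have e12 : ηg n 1 2 = ηB n 1 := ηg_base (by omega)
  have e2 : φg n 2 = σB n 1 * φB n * σiB n 1 := by
    rw [φg_succ (j := 1) (by omega), φg_one]; rfl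
  have hi : ηB n 1 * ηB n 1 = ηB n 1 := by
    have := rel (tbRel.eta_idem (n := n) 1 (by omega) (by omega))
    rwa [map_mul] at this
  have hp : φB n * φB n = φB n := by
    have := rel (tbRel.phi_idem (n := n))
    rwa [map_mul] at this
  have hc : φB n * ηB n 1 = ηB n 1 * φB n := by
    have := rel (tbRel.phi_eta (n := n) 1 (by omega) (by omega))
    rwa [map_mul, map_mul] at this
  have r1 : φB n * ηB n 1 = φB n * φg n 2 := by
    have := rel (tbRel.phi_eta_one h)
    rw [e2]
    simp only [map_mul, mul_assoc] at this ⊢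
    exact this
  have r2 : φB n * φg n 2 = φg n 2 * ηB n 1 := by
    have := rel (tbRel.phi_eta_one' h)
    rw [e2]
    simp only [map_mul, mul_assoc] at this ⊢
    exact this
  rw [e12, φg_one]
  constructor
  · rw [← r1, mul_assoc, hi]
  · rw [mul_assoc, ← r1, hc, ← mul_assoc, hi]

end TiedBraidB

open TiedBraidB in
/-- In `TBₙᴮ`, ties induce a transitive relation on the strands:
for pairwise distinct `i, k, m ∈ {1, …, n}`, `η_{i,k} η_{k,m} η_{i,m} = η_{i,k} η_{k,m}`;
and for `i ≠ j` in `{1, …, n}`, `φᵢ φⱼ η_{i,j} = φᵢ φⱼ` and `η_{i,j} φᵢ φⱼ = η_{i,j} φᵢ`. -/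
theorem ties_transitivity_absorption (n : ℕ) :
    (∀ (i k m : ℕ) (_hi1 : 1 ≤ i) (_hi2 : i ≤ n) (_hk1 : 1 ≤ k) (_hk2 : k ≤ n)
        (_hm1 : 1 ≤ m) (_hm2 : m ≤ n) (_hik : i ≠ k) (_hkm : k ≠ m) (_him : i ≠ m),
      ηg n i k * ηg n k m * ηg n i m = ηg n i k * ηg n k m) ∧
    (∀ (i j : ℕ) (_hi1 : 1 ≤ i) (_hi2 : i ≤ n) (_hj1 : 1 ≤ j) (_hj2 : j ≤ n) (_hij : i ≠ j),
      φg n i * φg n j * ηg n i j = φg n i * φg n j ∧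
      ηg n i j * φg n i * φg n j = ηg n i j * φg n i) := by
  constructor
  · intro i k m hi hi' hk hk' hm hm' h1 h2 h3
    refine triple_reach (n := n) (fun i k m => ηg n i k * ηg n k m * ηg n i m = ηg n i k * ηg n k m)
      ?_ triple_base i k m ⟨hi, hi'⟩ ⟨hk, hk'⟩ ⟨hm, hm'⟩ h1 h2 h3
    intro t ht ht' a b d ha hb hd hab hbd had h
    apply c_inj t
    simp only [c_mul]
    rw [c_ηg ha.1 ha.2 hb.1 hb.2 hab ht ht', c_ηg hb.1 hb.2 hd.1 hd.2 hbd ht ht',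
      c_ηg ha.1 ha.2 hd.1 hd.2 had ht ht']
    exact h
  · intro i j hi hi' hj hj' hij
    refine pair_reach (n := n) (fun i j => φg n i * φg n j * ηg n i j = φg n i * φg n j ∧
      ηg n i j * φg n i * φg n j = ηg n i j * φg n i) ?_ pair_base i j ⟨hi, hi'⟩ ⟨hj, hj'⟩ hij
    intro t ht ht' a b ha hb hab h
    constructor
    · apply c_inj t
      simp only [c_mul]
      rw [c_ηg ha.1 ha.2 hb.1 hb.2 hab ht ht', c_φg ha.1 ha.2 ht ht', c_φg hb.1 hb.2 ht ht']
      exact h.1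
    · apply c_inj t
      simp only [c_mul]
      rw [c_ηg ha.1 ha.2 hb.1 hb.2 hab ht ht', c_φg ha.1 ha.2 ht ht', c_φg hb.1 hb.2 ht ht']
      exact h.2
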